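/- Fix $d \in \mathbb{N}$ and constants $c_0, c_1, M > 0$. Let $m \in \mathbb{R}^d$ with $\|m\|_\infty \le M$, let $C$ be a symmetric positive definite $d \times d$ matrix such that all entries of $C$ and of $C^{-1}$ are bounded by $M$ in absolute value, and let $H : \mathbb{R}^d \to \mathbb{R}$ be measurable with $|H(x)| \le c_0 x^T x + c_1$ for all $x$. Let $\mathbb{E}$ denote expectation with respect to the Gaussian measure $\mathcal{N}(m, C)$ on $\mathbb{R}^d$, whose density is $(2\pi)^{-d/2} (\det C)^{-1/2} \exp\big(-\tfrac12 (x-m)^T C^{-1} (x-m)\big)$, and let $\lambda_{\min}$ denote the smallest eigenvalue of a symmetric matrix. (1) Let $\bar\varepsilon > 0$ with $\lambda_{\min}(C^{-1}) > 2 \bar\varepsilon c_0$, and let $\eta > 0$ be such that $\lambda_{\min}(C^{-1}) \ge 2 \bar\varepsilon c_0 + \eta$. Then there exists $K > 0$, depending only on $d, c_0, c_1, M, \bar\varepsilon, \eta$ (and not otherwise on $m$, $C$, $H$), such that for every $\varepsilon \in [0, \bar\varepsilon]$ the expectation $\mathbb{E}[e^{-\varepsilon H}]$ is finite and positive, and $|\log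 \mathbb{E}[e^{-\varepsilon H}]| \le K \varepsilon$. (2) There exist $\varepsilon_0 > 0$ and $K > 0$, depending only on $d, c_0, c_1, M$, such that, without any further condition on $C$, for every $\varepsilon \in [0, \varepsilon_0]$ the expectation $\mathbb{E}[e^{-\varepsilon H}]$ is finite and positive, and $|\log \mathbb{E}[e^{-\varepsilon H}]| \le K \varepsilon$. -/

import Mathlib

open MeasureTheory

noncomputable section

/-- The density `(2π)^{-d/2} (det C)^{-1/2} exp (-½ (x - m)ᵀ C⁻¹ (x - m))` of `N(m, C)`. -/
def gaussianDensity {d : ℕ} (m : Fin d → ℝ) (C : Matrix (Fin d) (Fin d) ℝ) (x : Fin d → ℝ) : ℝ :=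
  (2 * Real.pi) ^ (-(d : ℝ) / 2) * C.det ^ (-(1 / 2) : ℝ) *
    Real.exp (-(1 / 2 * ((x - m) ⬝ᵥ C⁻¹.mulVec (x - m))))

/-- The Gaussian measure `N(m, C)` on `ℝ^d` (for `C` symmetric positive definite): the measure with
density `gaussianDensity m C` with respect to Lebesgue measure. -/
def gaussianMeasure {d : ℕ} (m : Fin d → ℝ) (C : Matrix (Fin d) (Fin d) ℝ) :
    Measure (Fin d → ℝ) :=
  volume.withDensity fun x => ENNReal.ofReal (gaussianDensity m C x)

/-- The smallest eigenvalue of a symmetric matrix (its real spectrum is the finite set of its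
eigenvalues, nonempty as soon as `0 < d`). -/
def lambdaMin {d : ℕ} (A : Matrix (Fin d) (Fin d) ℝ) : ℝ := sInf (spectrum ℝ A)

end

open scoped MatrixOrder in
theorem Matrix.PosDef.exists_eq_transpose_mul_self {n : Type*} [Fintype n] [DecidableEq n]
    {A : Matrix n n ℝ} (hA : A.PosDef) : ∃ S : Matrix n n ℝ, A = S.transpose * S := by
  obtain ⟨S, hS⟩ := CStarAlgebra.nonneg_iff_eq_star_mul_self.mp hA.posSemidef.nonneg
  exact ⟨S, by simpa [Matrix.star_eq_conjTranspose] using hS⟩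

theorem exp_neg_mul_dotProduct_self {ι : Type*} [Fintype ι] (b : ℝ) (x : ι → ℝ) :
    Real.exp (-b * (x ⬝ᵥ x)) = ∏ i, Real.exp (-b * x i ^ 2) := by
  rw [← Real.exp_sum, dotProduct, Finset.mul_sum]
  simp only [pow_two]

theorem integrable_exp_neg_mul_dotProduct_self {ι : Type*} [Fintype ι] {b : ℝ} (hb : 0 < b) :
    Integrable (fun x : ι → ℝ => Real.exp (-b * (x ⬝ᵥ x))) := by
  simp only [exp_neg_mul_dotProduct_self]
  exact Integrable.fintype_prod (f := fun _ t => Real.exp (-b * t ^ 2))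
    fun _ => integrable_exp_neg_mul_sq hb

theorem integral_exp_neg_mul_dotProduct_self {ι : Type*} [Fintype ι] (b : ℝ) :
    ∫ x : ι → ℝ, Real.exp (-b * (x ⬝ᵥ x)) = √(Real.pi / b) ^ Fintype.card ι := by
  simp only [exp_neg_mul_dotProduct_self]
  rw [integral_fintype_prod_volume_eq_pow (fun t : ℝ => Real.exp (-b * t ^ 2)), integral_gaussian]

theorem integral_comp_mulVec {ι : Type*} [Fintype ι] [DecidableEq ι] {S : Matrix ι ι ℝ}
    (hS : S.det ≠ 0) {f : (ι → ℝ) → ℝ} (hf : Continuous f) :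
    ∫ x, f (S.mulVec x) = |S.det⁻¹| * ∫ x, f x := by
  have h := Real.map_matrix_volume_pi_eq_smul_volume_pi hS
  have hc : Continuous (Matrix.toLin' S) := LinearMap.continuous_of_finiteDimensional _
  have := integral_map (μ := volume) hc.measurable.aemeasurable (f := f)
    hf.aestronglyMeasurable
  rw [h, integral_smul_measure, ENNReal.toReal_ofReal (abs_nonneg _)] at this
  simpa using this.symm

theorem integral_exp_neg_half_quadratic {ι : Type*} [Fintype ι] [DecidableEq ι]
    {A : Matrix ι ι ℝ} (hA : A.PosDef) :
    ∫ x : ι → ℝ, Real.exp (-(1 / 2 * (x ⬝ᵥ A.mulVec x))) =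
      A.det ^ (-(1 / 2) : ℝ) * (2 * Real.pi) ^ ((Fintype.card ι : ℝ) / 2) := by
  obtain ⟨S, rfl⟩ := hA.exists_eq_transpose_mul_self
  have hdet : (S.transpose * S).det = S.det ^ 2 := by simp [pow_two]
  have hpos := hA.det_pos
  rw [hdet] at hpos ⊢
  have hS : S.det ≠ 0 := fun h => by simp [h] at hpos
  have hq (x : ι → ℝ) : Real.exp (-(1 / 2 * (x ⬝ᵥ (S.transpose * S).mulVec x))) =
      Real.exp (-(1 / 2) * (S.mulVec x ⬝ᵥ S.mulVec x)) := by
    rw [← Matrix.mulVec_mulVec, Matrix.dotProduct_mulVec, Matrix.vecMul_transpose, neg_mul]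
  simp only [hq]
  rw [integral_comp_mulVec hS (f := fun y => Real.exp (-(1 / 2) * (y ⬝ᵥ y))) (by fun_prop),
    integral_exp_neg_mul_dotProduct_self, Real.rpow_neg (sq_nonneg _), ← Real.sqrt_eq_rpow,
    Real.sqrt_sq_eq_abs, abs_inv]
  congr 1
  rw [Real.sqrt_eq_rpow, ← Real.rpow_natCast, ← Real.rpow_mul (by positivity)]
  congr 1 <;> ring

theorem gaussianDensity_nonneg {d : ℕ} (m : Fin d → ℝ) {C : Matrix (Fin d) (Fin d) ℝ}
    (hC : C.PosDef) (x : Fin d → ℝ) : 0 ≤ gaussianDensity m C x := by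
  have := hC.det_pos
  unfold gaussianDensity
  positivity

theorem continuous_gaussianDensity {d : ℕ} (m : Fin d → ℝ) (C : Matrix (Fin d) (Fin d) ℝ) :
    Continuous (gaussianDensity m C) := by
  unfold gaussianDensity
  fun_prop

theorem integral_gaussianDensity {d : ℕ} (m : Fin d → ℝ) {C : Matrix (Fin d) (Fin d) ℝ}
    (hC : C.PosDef) : ∫ x, gaussianDensity m C x = 1 := by
  have hdet := hC.det_pos
  unfold gaussianDensity
  rw [integral_const_mul,
    integral_sub_right_eq_self (fun y => Real.exp (-(1 / 2 * (y ⬝ᵥ C⁻¹.mulVec y)))) m,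
    integral_exp_neg_half_quadratic hC.inv, Matrix.det_nonsing_inv, Ring.inverse_eq_inv',
    Real.inv_rpow hdet.le, Fintype.card_fin, neg_div,
    Real.rpow_neg (by positivity : (0 : ℝ) ≤ 2 * Real.pi)]
  field_simp

theorem isProbabilityMeasure_gaussianMeasure {d : ℕ} (m : Fin d → ℝ)
    {C : Matrix (Fin d) (Fin d) ℝ} (hC : C.PosDef) :
    IsProbabilityMeasure (gaussianMeasure m C) := by
  have h1 := integral_gaussianDensity m hC
  have hint : Integrable (gaussianDensity m C) :=
    not_imp_comm.mp integral_undef (by rw [h1]; exact one_ne_zero)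
  refine ⟨?_⟩
  rw [gaussianMeasure, withDensity_apply _ MeasurableSet.univ, Measure.restrict_univ,
    ← ofReal_integral_eq_lintegral_ofReal hint (ae_of_all _ (gaussianDensity_nonneg m hC)), h1,
    ENNReal.ofReal_one]

theorem integrable_gaussianMeasure_iff {d : ℕ} (m : Fin d → ℝ) {C : Matrix (Fin d) (Fin d) ℝ}
    (hC : C.PosDef) {f : (Fin d → ℝ) → ℝ} :
    Integrable f (gaussianMeasure m C) ↔ Integrable (fun x => gaussianDensity m C x * f x) := by
  rw [gaussianMeasure, integrable_withDensity_iff_integrable_smul'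
    (continuous_gaussianDensity m C).measurable.ennreal_ofReal (by simp)]
  simp only [ENNReal.toReal_ofReal (gaussianDensity_nonneg m hC _), smul_eq_mul]

theorem integral_gaussianMeasure {d : ℕ} (m : Fin d → ℝ) {C : Matrix (Fin d) (Fin d) ℝ}
    (hC : C.PosDef) (f : (Fin d → ℝ) → ℝ) :
    ∫ x, f x ∂gaussianMeasure m C = ∫ x, gaussianDensity m C x * f x := by
  rw [gaussianMeasure, integral_withDensity_eq_integral_toReal_smul
    (continuous_gaussianDensity m C).measurable.ennreal_ofReal (by simp)]
  simp only [ENNReal.toReal_ofReal (gaussianDensity_nonneg m hC _), smul_eq_mul]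

theorem lambdaMin_mul_dotProduct_self_le {d : ℕ} {A : Matrix (Fin d) (Fin d) ℝ}
    (hA : A.IsHermitian) (x : Fin d → ℝ) :
    lambdaMin A * (x ⬝ᵥ x) ≤ x ⬝ᵥ A.mulVec x := by
  set q := lambdaMin A with hq
  have hB : (A - algebraMap ℝ (Matrix (Fin d) (Fin d) ℝ) q).IsHermitian := by
    refine hA.sub ?_
    rw [Matrix.algebraMap_eq_diagonal]
    exact Matrix.isHermitian_diagonal _
  have hpsd : (A - algebraMap ℝ (Matrix (Fin d) (Fin d) ℝ) q).PosSemidef := by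
    rw [hB.posSemidef_iff_eigenvalues_nonneg]
    intro i
    have hmem := hB.eigenvalues_mem_spectrum_real i
    rw [← spectrum.sub_singleton_eq] at hmem
    obtain ⟨l, hl, _, rfl, h⟩ := hmem
    have := csInf_le Matrix.finite_real_spectrum.bddBelow hl
    simp only [← h, Pi.zero_apply]
    exact sub_nonneg.mpr this
  have := hpsd.dotProduct_mulVec_nonneg x
  rw [Algebra.algebraMap_eq_smul_one, Matrix.sub_mulVec, Matrix.smul_mulVec, Matrix.one_mulVec,
    dotProduct_sub, dotProduct_smul, smul_eq_mul, star_trivial] at this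
  linarith

theorem dotProduct_mulVec_le_of_abs_entry_le {ι : Type*} [Fintype ι] {C : Matrix ι ι ℝ} {M : ℝ}
    (hC : ∀ i j, |C i j| ≤ M) (x : ι → ℝ) :
    x ⬝ᵥ C.mulVec x ≤ M * Fintype.card ι * (x ⬝ᵥ x) := by
  have h (i j : ι) : x i * (C i j * x j) ≤ M * ((x i * x i + x j * x j) / 2) := by
    have h1 : x i * (C i j * x j) ≤ |C i j| * |x i * x j| := by
      rw [← abs_mul]
      exact (le_abs_self _).trans_eq (by ring_nf)
    have h2 : |x i * x j| ≤ (x i * x i + x j * x j) / 2 :=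
      abs_le.mpr ⟨by nlinarith [sq_nonneg (x i + x j)], by nlinarith [sq_nonneg (x i - x j)]⟩
    have hM : 0 ≤ M := (abs_nonneg _).trans (hC i j)
    exact h1.trans (mul_le_mul (hC i j) h2 (abs_nonneg _) hM)
  calc x ⬝ᵥ C.mulVec x = ∑ i, ∑ j, x i * (C i j * x j) := by
        simp only [dotProduct, Matrix.mulVec, Finset.mul_sum]
    _ ≤ ∑ i, ∑ j, M * ((x i * x i + x j * x j) / 2) :=
        Finset.sum_le_sum fun i _ => Finset.sum_le_sum fun j _ => h i j
    _ = M * Fintype.card ι * (x ⬝ᵥ x) := by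
        simp only [← Finset.mul_sum, ← Finset.sum_div, Finset.sum_add_distrib, Finset.sum_const,
          Finset.card_univ, nsmul_eq_mul, dotProduct]
        simp only [mul_left_comm _ (Fintype.card ι : ℝ), ← Finset.mul_sum]
        ring

/-- An upper bound `C ≤ L` in the sense of quadratic forms gives `C⁻¹ ≥ L⁻¹`. -/
theorem Matrix.PosDef.inv_mul_dotProduct_self_le {ι : Type*} [Fintype ι] [DecidableEq ι]
    {C : Matrix ι ι ℝ} (hC : C.PosDef) {L : ℝ} (hL : 0 < L)
    (h : ∀ x, x ⬝ᵥ C.mulVec x ≤ L * (x ⬝ᵥ x)) (x : ι → ℝ) :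
    L⁻¹ * (x ⬝ᵥ x) ≤ x ⬝ᵥ C⁻¹.mulVec x := by
  have hu : IsUnit C.det := hC.det_pos.ne'.isUnit
  have hsymm : C.transpose = C := by simpa using hC.isHermitian.eq
  have h0 := hC.inv.posSemidef.dotProduct_mulVec_nonneg (x - L⁻¹ • C.mulVec x)
  have e1 : C⁻¹.mulVec (C.mulVec x) = x := by
    rw [Matrix.mulVec_mulVec, Matrix.nonsing_inv_mul _ hu, Matrix.one_mulVec]
  have e2 : C.mulVec x ⬝ᵥ C⁻¹.mulVec x = x ⬝ᵥ x := by
    have : C.mulVec x = Matrix.vecMul x C := by rw [← Matrix.vecMul_transpose, hsymm]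
    rw [this, ← Matrix.dotProduct_mulVec, Matrix.mulVec_mulVec, Matrix.mul_nonsing_inv _ hu,
      Matrix.one_mulVec]
  rw [star_trivial, Matrix.mulVec_sub, Matrix.mulVec_smul, e1, sub_dotProduct, dotProduct_sub,
    dotProduct_sub, smul_dotProduct, smul_dotProduct, dotProduct_smul, dotProduct_smul, e2,
    dotProduct_comm (C.mulVec x) x] at h0
  simp only [smul_eq_mul] at h0
  have h1 : L⁻¹ * (L⁻¹ * (x ⬝ᵥ C.mulVec x)) ≤ L⁻¹ * (x ⬝ᵥ x) := by
    rw [inv_mul_le_iff₀ hL (b := L⁻¹ * _), ← mul_assoc, mul_inv_cancel₀ hL.ne', one_mul,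
      inv_mul_le_iff₀ hL]
    exact h x
  linarith

/-- If `G` has mean at most `B`, then `𝔼[f]` lies between `B⁻ˢ` and `Bˢ` for every `f` between
`G⁻ˢ` and `Gˢ`, where `0 ≤ s ≤ 1`. -/
theorem abs_log_integral_le_of_rpow_bounds {Ω : Type*} [MeasurableSpace Ω] {μ : Measure Ω}
    [IsProbabilityMeasure μ] {G f : Ω → ℝ} {B s : ℝ} (hs : s ∈ Set.Icc (0 : ℝ) 1)
    (hG : ∀ x, 0 < G x) (hGint : Integrable G μ) (hB : 0 < B) (hGB : ∫ x, G x ∂μ ≤ B)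
    (hf : AEStronglyMeasurable f μ) (hlow : ∀ x, G x ^ (-s) ≤ f x) (hup : ∀ x, f x ≤ G x ^ s) :
    Integrable f μ ∧ 0 < ∫ x, f x ∂μ ∧ |Real.log (∫ x, f x ∂μ)| ≤ s * Real.log B := by
  have hf0 (x) : 0 < f x := (Real.rpow_pos_of_pos (hG x) _).trans_le (hlow x)
  have hBs : 0 < B ^ s := Real.rpow_pos_of_pos hB s
  have bern (x) : G x ^ s ≤ B ^ s * (1 + s * (G x / B - 1)) := by
    have := rpow_one_add_le_one_add_mul_self (s := G x / B - 1)
      (by have := div_pos (hG x) hB; linarith) hs.1 hs.2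
    rw [add_sub_cancel, Real.div_rpow (hG x).le hB.le, div_le_iff₀ hBs] at this
    linarith
  have hslope : Integrable (fun x => s * (G x / B - 1)) μ :=
    ((hGint.div_const B).sub (integrable_const _)).const_mul s
  have hmajint : Integrable (fun x => B ^ s * (1 + s * (G x / B - 1))) μ :=
    ((integrable_const _).add hslope).const_mul _
  have hmaj : ∫ x, B ^ s * (1 + s * (G x / B - 1)) ∂μ ≤ B ^ s := by
    have e : ∫ x, B ^ s * (1 + s * (G x / B - 1)) ∂μ =
        B ^ s * (1 + s * ((∫ x, G x ∂μ) / B - 1)) := by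
      rw [integral_const_mul, integral_add (integrable_const _) hslope, integral_const_mul,
        integral_sub (hGint.div_const B) (integrable_const _), integral_div]
      simp
    rw [e]
    refine mul_le_of_le_one_right hBs.le ?_
    have : (∫ x, G x ∂μ) / B ≤ 1 := (div_le_one hB).mpr hGB
    nlinarith [hs.1]
  have hfint : Integrable f μ := hmajint.mono' hf <| ae_of_all _ fun x => by
    rw [Real.norm_of_nonneg (hf0 x).le]
    exact (hup x).trans (bern x)
  have hupper : ∫ x, f x ∂μ ≤ B ^ s :=
    (integral_mono hfint hmajint fun x => (hup x).trans (bern x)).trans hmaj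
  have hlower : B ^ (-s) ≤ ∫ x, f x ∂μ := by
    have key (x) : (B ^ s)⁻¹ * (2 - (B ^ s)⁻¹ * (B ^ s * (1 + s * (G x / B - 1)))) ≤ f x := by
      refine le_trans ?_ (hlow x)
      rw [Real.rpow_neg (hG x).le]
      have hg : 0 < G x ^ s := Real.rpow_pos_of_pos (hG x) s
      have hb := bern x
      set g := G x ^ s
      set b := B ^ s
      calc b⁻¹ * (2 - b⁻¹ * (b * (1 + s * (G x / B - 1)))) ≤ b⁻¹ * (2 - b⁻¹ * g) := by gcongr
        _ ≤ g⁻¹ := by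
          have : g⁻¹ - b⁻¹ * (2 - b⁻¹ * g) = g * (g⁻¹ - b⁻¹) ^ 2 := by field_simp; ring
          nlinarith [mul_nonneg hg.le (sq_nonneg (g⁻¹ - b⁻¹))]
    have hint := integral_mono (((integrable_const (2 : ℝ)).sub
      (hmajint.const_mul (B ^ s)⁻¹)).const_mul (B ^ s)⁻¹) hfint key
    refine le_trans ?_ hint
    simp only [Pi.sub_apply]
    rw [integral_const_mul, integral_sub (integrable_const _) (hmajint.const_mul _),
      integral_const_mul, Real.rpow_neg hB.le]
    simp only [integral_const, probReal_univ, one_smul]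
    refine le_mul_of_one_le_right (inv_nonneg.mpr hBs.le) ?_
    have : (B ^ s)⁻¹ * ∫ x, B ^ s * (1 + s * (G x / B - 1)) ∂μ ≤ 1 :=
      inv_mul_le_one_of_le₀ hmaj hBs.le
    linarith
  have hpos : 0 < ∫ x, f x ∂μ := (Real.rpow_pos_of_pos hB _).trans_le hlower
  refine ⟨hfint, hpos, abs_le.mpr ⟨?_, ?_⟩⟩
  · have := Real.log_le_log (Real.rpow_pos_of_pos hB _) hlower
    rw [Real.log_rpow hB] at this
    linarith
  · have := Real.log_le_log hpos hupper
    rwa [Real.log_rpow hB] at this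

/-- A bound for `𝔼[exp (a (c₀ xᵀx + c₁))]` that is uniform over the Gaussian measures with
`|mᵢ| ≤ M`, `|(C⁻¹)ᵢⱼ| ≤ M` and `C⁻¹ ≥ 2 a c₀ + η`. -/
theorem exists_integral_exp_quadratic_le (d : ℕ) (c₁ M : ℝ) {a c₀ η : ℝ} (ha : 0 < a)
    (hc₀ : 0 < c₀) (hη : 0 < η) :
    ∃ B : ℝ, ∀ m : Fin d → ℝ, (∀ i, |m i| ≤ M) → ∀ C : Matrix (Fin d) (Fin d) ℝ, C.PosDef →
      (∀ i j, |C⁻¹ i j| ≤ M) →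
      (∀ x, (2 * a * c₀ + η) * (x ⬝ᵥ x) ≤ x ⬝ᵥ C⁻¹.mulVec x) →
      Integrable (fun x => Real.exp (a * (c₀ * (x ⬝ᵥ x) + c₁))) (gaussianMeasure m C) ∧
      ∫ x, Real.exp (a * (c₀ * (x ⬝ᵥ x) + c₁)) ∂gaussianMeasure m C ≤ B := by
  set R : ℝ := (a * c₀ + 4 * (a * c₀) ^ 2 / η) * (d * M ^ 2) + a * c₁
  set D : ℝ := (2 * Real.pi) ^ (-(d : ℝ) / 2) * (d.factorial * M ^ d) ^ (1 / 2 : ℝ) * Real.exp R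
    with hD
  refine ⟨D * ∫ y : Fin d → ℝ, Real.exp (-(η / 4) * (y ⬝ᵥ y)), fun m hm C hC hCinv hq => ?_⟩
  have hdetC := hC.det_pos
  have hdet : C.det ^ (-(1 / 2) : ℝ) ≤ (d.factorial * M ^ d) ^ (1 / 2 : ℝ) := by
    have h := Matrix.det_le (A := C⁻¹) (abv := AbsoluteValue.abs) (x := M) hCinv
    rw [Fintype.card_fin, nsmul_eq_mul, Matrix.det_nonsing_inv, Ring.inverse_eq_inv'] at h
    rw [Real.rpow_neg hdetC.le, ← Real.inv_rpow hdetC.le]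
    exact Real.rpow_le_rpow (inv_nonneg.mpr hdetC.le) ((le_abs_self _).trans h) (by norm_num)
  have hmm : m ⬝ᵥ m ≤ d * M ^ 2 := by
    calc m ⬝ᵥ m ≤ ∑ _i : Fin d, M ^ 2 := Finset.sum_le_sum fun i _ => by
          rw [← pow_two]
          exact sq_le_sq' (abs_le.mp (hm i)).1 (abs_le.mp (hm i)).2
      _ = d * M ^ 2 := by simp
  have hexp (x : Fin d → ℝ) : -(1 / 2 * ((x - m) ⬝ᵥ C⁻¹.mulVec (x - m))) +
      a * (c₀ * (x ⬝ᵥ x) + c₁) ≤ R + -(η / 4) * ((x - m) ⬝ᵥ (x - m)) := by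
    have h1 := hq (x - m)
    obtain ⟨y, rfl⟩ : ∃ y, x = y + m := ⟨x - m, by simp⟩
    rw [add_sub_cancel_right] at h1 ⊢
    have h2 : (y + m) ⬝ᵥ (y + m) = y ⬝ᵥ y + 2 * (y ⬝ᵥ m) + m ⬝ᵥ m := by
      rw [add_dotProduct, dotProduct_add, dotProduct_add, dotProduct_comm m y]; ring
    have hac : 0 < a * c₀ := mul_pos ha hc₀
    have h3 : 2 * (a * c₀) * (y ⬝ᵥ m) ≤ η / 4 * (y ⬝ᵥ y) + 4 * (a * c₀) ^ 2 / η * (m ⬝ᵥ m) := by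
      have h0 : 0 ≤ (y - (4 * (a * c₀) / η) • m) ⬝ᵥ (y - (4 * (a * c₀) / η) • m) :=
        Finset.sum_nonneg fun i _ => mul_self_nonneg _
      have e : η / 4 * ((y - (4 * (a * c₀) / η) • m) ⬝ᵥ (y - (4 * (a * c₀) / η) • m)) =
          η / 4 * (y ⬝ᵥ y) + 4 * (a * c₀) ^ 2 / η * (m ⬝ᵥ m) - 2 * (a * c₀) * (y ⬝ᵥ m) := by
        simp only [sub_dotProduct, dotProduct_sub, smul_dotProduct, dotProduct_smul, smul_eq_mul,
          dotProduct_comm m y]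
        field_simp
        ring
      have := mul_nonneg (by positivity : (0 : ℝ) ≤ η / 4) h0
      linarith
    have h4 : (a * c₀ + 4 * (a * c₀) ^ 2 / η) * (m ⬝ᵥ m) ≤
        (a * c₀ + 4 * (a * c₀) ^ 2 / η) * (d * M ^ 2) := by gcongr
    rw [h2]
    simp only [R]
    nlinarith
  have hbound (x : Fin d → ℝ) : gaussianDensity m C x * Real.exp (a * (c₀ * (x ⬝ᵥ x) + c₁)) ≤
      D * Real.exp (-(η / 4) * ((x - m) ⬝ᵥ (x - m))) := by
    rw [gaussianDensity, mul_assoc, ← Real.exp_add, hD, mul_assoc _ (Real.exp R), ← Real.exp_add]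
    have h0 := (Real.rpow_nonneg hdetC.le _).trans hdet
    exact mul_le_mul (mul_le_mul_of_nonneg_left hdet (by positivity))
      (Real.exp_le_exp.mpr (hexp x)) (Real.exp_nonneg _) (mul_nonneg (by positivity) h0)
  have hmaj : Integrable fun x : Fin d → ℝ => D * Real.exp (-(η / 4) * ((x - m) ⬝ᵥ (x - m))) :=
    ((integrable_exp_neg_mul_dotProduct_self (by positivity : 0 < η / 4)).comp_sub_right
      m).const_mul D
  have hint : Integrable fun x : Fin d → ℝ =>
      gaussianDensity m C x * Real.exp (a * (c₀ * (x ⬝ᵥ x) + c₁)) :=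
    hmaj.mono' ((continuous_gaussianDensity m C).mul (by fun_prop)).aestronglyMeasurable <|
      ae_of_all _ fun x => by
        rw [Real.norm_of_nonneg (mul_nonneg (gaussianDensity_nonneg m hC x) (Real.exp_nonneg _))]
        exact hbound x
  refine ⟨(integrable_gaussianMeasure_iff m hC).mpr hint, ?_⟩
  rw [integral_gaussianMeasure m hC]
  refine (integral_mono hint hmaj hbound).trans_eq ?_
  rw [integral_const_mul,
    integral_sub_right_eq_self (fun y => Real.exp (-(η / 4) * (y ⬝ᵥ y))) m]

theorem exists_abs_log_integral_exp_le (d : ℕ) (M : ℝ) {a c₀ c₁ η : ℝ} (ha : 0 < a)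
    (hc₀ : 0 < c₀) (hη : 0 < η) :
    ∃ K : ℝ, 0 < K ∧ ∀ m : Fin d → ℝ, (∀ i, |m i| ≤ M) →
      ∀ C : Matrix (Fin d) (Fin d) ℝ, C.PosDef → (∀ i j, |C⁻¹ i j| ≤ M) →
      (∀ x, (2 * a * c₀ + η) * (x ⬝ᵥ x) ≤ x ⬝ᵥ C⁻¹.mulVec x) →
      ∀ H : (Fin d → ℝ) → ℝ, Measurable H → (∀ x, |H x| ≤ c₀ * (x ⬝ᵥ x) + c₁) →
      ∀ ε ∈ Set.Icc 0 a,
        Integrable (fun x => Real.exp (-(ε * H x))) (gaussianMeasure m C) ∧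
        0 < ∫ x, Real.exp (-(ε * H x)) ∂gaussianMeasure m C ∧
        |Real.log (∫ x, Real.exp (-(ε * H x)) ∂gaussianMeasure m C)| ≤ K * ε := by
  obtain ⟨B, hB⟩ := exists_integral_exp_quadratic_le d c₁ M ha hc₀ hη
  have hB2 : 1 < max B 2 := lt_max_of_lt_right one_lt_two
  refine ⟨Real.log (max B 2) / a, div_pos (Real.log_pos hB2) ha,
    fun m hm C hC hCinv hq H hH hHb ε hε => ?_⟩
  have := isProbabilityMeasure_gaussianMeasure m hC
  obtain ⟨hint, hle⟩ := hB m hm C hC hCinv hq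
  have hpow (t x : ℝ) : Real.exp (a * x) ^ (t / a) = Real.exp (t * x) := by
    rw [← Real.exp_mul]
    congr 1
    field_simp
  have hlow (x) : Real.exp (a * (c₀ * (x ⬝ᵥ x) + c₁)) ^ (-(ε / a)) ≤ Real.exp (-(ε * H x)) := by
    rw [← neg_div, hpow, neg_mul]
    exact Real.exp_le_exp.mpr (neg_le_neg
      (mul_le_mul_of_nonneg_left ((le_abs_self _).trans (hHb x)) hε.1))
  have hup (x) : Real.exp (-(ε * H x)) ≤ Real.exp (a * (c₀ * (x ⬝ᵥ x) + c₁)) ^ (ε / a) := by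
    rw [hpow, ← mul_neg]
    exact Real.exp_le_exp.mpr
      (mul_le_mul_of_nonneg_left ((neg_le_abs _).trans (hHb x)) hε.1)
  obtain ⟨h1, h2, h3⟩ := abs_log_integral_le_of_rpow_bounds
    ⟨div_nonneg hε.1 ha.le, (div_le_one ha).mpr hε.2⟩ (fun x => Real.exp_pos _) hint
    (zero_lt_one.trans hB2) (hle.trans (le_max_left _ _))
    (by fun_prop : Measurable fun x => Real.exp (-(ε * H x))).aestronglyMeasurable hlow hup
  exact ⟨h1, h2, h3.trans_eq (by ring)⟩

/-- Let `d ∈ ℕ` and `c₀, c₁, M > 0`. Below, `m` ranges over the vectors with entries bounded by `M`,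
`C` over the symmetric positive definite matrices with entries of `C` and `C⁻¹` bounded by `M`, and
`H` over the measurable functions with `|H x| ≤ c₀ xᵀx + c₁`.

1. For all `ε̄, η > 0` there is `K > 0`, depending only on `d, c₀, c₁, M, ε̄, η`, such that if
`λ_min(C⁻¹) ≥ 2 ε̄ c₀ + η` then, for all `ε ∈ [0, ε̄]`, `𝔼[e^{-εH}]` is finite and positive and
`|log 𝔼[e^{-εH}]| ≤ K ε`. (Every `C` with `λ_min(C⁻¹) > 2 ε̄ c₀` is covered, by some `η > 0`.)

2. There are `ε₀, K > 0`, depending only on `d, c₀, c₁, M`, such that the same holds for all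
`ε ∈ [0, ε₀]`, without any further condition on `C`. -/
theorem perturbed_gaussian_log_normalization (d : ℕ) (c₀ c₁ M : ℝ)
    (hc₀ : 0 < c₀) (hc₁ : 0 < c₁) (hM : 0 < M) :
    (∀ εbar : ℝ, 0 < εbar → ∀ η : ℝ, 0 < η →
      ∃ K : ℝ, 0 < K ∧
        ∀ m : Fin d → ℝ, (∀ i, |m i| ≤ M) →
        ∀ C : Matrix (Fin d) (Fin d) ℝ, C.PosDef →
          (∀ i j, |C i j| ≤ M) → (∀ i j, |C⁻¹ i j| ≤ M) →
          2 * εbar * c₀ + η ≤ lambdaMin C⁻¹ →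
        ∀ H : (Fin d → ℝ) → ℝ, Measurable H → (∀ x, |H x| ≤ c₀ * (x ⬝ᵥ x) + c₁) →
        ∀ ε ∈ Set.Icc 0 εbar,
          Integrable (fun x => Real.exp (-(ε * H x))) (gaussianMeasure m C) ∧
          0 < ∫ x, Real.exp (-(ε * H x)) ∂gaussianMeasure m C ∧
          |Real.log (∫ x, Real.exp (-(ε * H x)) ∂gaussianMeasure m C)| ≤ K * ε) ∧
    (∃ ε₀ : ℝ, 0 < ε₀ ∧ ∃ K : ℝ, 0 < K ∧
        ∀ m : Fin d → ℝ, (∀ i, |m i| ≤ M) →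
        ∀ C : Matrix (Fin d) (Fin d) ℝ, C.PosDef →
          (∀ i j, |C i j| ≤ M) → (∀ i j, |C⁻¹ i j| ≤ M) →
        ∀ H : (Fin d → ℝ) → ℝ, Measurable H → (∀ x, |H x| ≤ c₀ * (x ⬝ᵥ x) + c₁) →
        ∀ ε ∈ Set.Icc 0 ε₀,
          Integrable (fun x => Real.exp (-(ε * H x))) (gaussianMeasure m C) ∧
          0 < ∫ x, Real.exp (-(ε * H x)) ∂gaussianMeasure m C ∧
          |Real.log (∫ x, Real.exp (-(ε * H x)) ∂gaussianMeasure m C)| ≤ K * ε) := by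
  refine ⟨fun εbar hεbar η hη => ?_, ?_⟩
  · obtain ⟨K, hK, h⟩ := exists_abs_log_integral_exp_le d M (c₁ := c₁) hεbar hc₀ hη
    refine ⟨K, hK, fun m hm C hC _ hCinv hl => h m hm C hC hCinv fun x => ?_⟩
    exact (mul_le_mul_of_nonneg_right hl (Finset.sum_nonneg fun i _ => mul_self_nonneg _)).trans
      (lambdaMin_mul_dotProduct_self_le hC.inv.isHermitian x)
  · have hL : 0 < M * (d + 1) := by positivity
    obtain ⟨K, hK, h⟩ := exists_abs_log_integral_exp_le d M (c₁ := c₁) (η := (M * (d + 1))⁻¹ / 2)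
      (by positivity : 0 < (M * (d + 1))⁻¹ / (4 * c₀)) hc₀ (by positivity)
    refine ⟨(M * (d + 1))⁻¹ / (4 * c₀), by positivity, K, hK,
      fun m hm C hC hCM hCinv => h m hm C hC hCinv fun x => ?_⟩
    have hq : 2 * ((M * (d + 1))⁻¹ / (4 * c₀)) * c₀ + (M * (d + 1))⁻¹ / 2 = (M * (d + 1))⁻¹ := by
      field_simp
      ring
    rw [hq]
    refine hC.inv_mul_dotProduct_self_le hL (fun y => ?_) x
    refine (dotProduct_mulVec_le_of_abs_entry_le hCM y).trans ?_
    rw [Fintype.card_fin]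
    have : 0 ≤ y ⬝ᵥ y := Finset.sum_nonneg fun i _ => mul_self_nonneg _
    gcongr
    linarith
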